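/- Let E be a lattice effect algebra and define x·y := ((x'∧y)⊕y')' for all x,y ∈ E. Then for all a, b ∈ E: a·b = b·[(b'·a')'·a']' (i.e., the identity (NG5) holds in (E;·,',0,1)). -/

import Mathlib

/-- An effect algebra: a partial algebra (E;⊕,',0,1). The partial operation ⊕ is
modeled by a definedness predicate `D` together with a total function `add` whose
value is only meaningful on defined pairs. -/
structure EffectAlgebra (E : Type*) where
  /-- definedness of `x ⊕ y` -/
  D : E → E → Prop
  /-- the value of `x ⊕ y` (meaningful only when `D x y`) -/
  add : E → E → E
  zero : E
  one : E
  /-- the complement `x'` -/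
  compl : E → E
  /-- (E1) commutativity -/
  E1 : ∀ x y, D x y → D y x ∧ add x y = add y x
  /-- (E2) associativity -/
  E2 : ∀ x y z, D x y → D (add x y) z →
    D y z ∧ D x (add y z) ∧ add (add x y) z = add x (add y z)
  /-- (E3) existence of the complement -/
  E3a : ∀ x, D x (compl x)
  E3b : ∀ x, add x (compl x) = one
  /-- (E3) uniqueness of the complement -/
  E3c : ∀ x y, D x y → add x y = one → y = compl x
  /-- (E4) -/
  E4 : ∀ x, D x one → x = zero

/-- The induced order of an effect algebra: `a ≤ b` iff `a ⊕ c = b` for some `c`. -/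
def EffectAlgebra.le {E : Type*} (A : EffectAlgebra E) (a b : E) : Prop :=
  ∃ c, A.D a c ∧ A.add a c = b

/-- A lattice effect algebra: an effect algebra whose induced order is a lattice,
with meet `inf` and join `sup`. -/
structure LatticeEffectAlgebra (E : Type*) extends EffectAlgebra E where
  inf : E → E → E
  sup : E → E → E
  inf_le_left : ∀ a b, toEffectAlgebra.le (inf a b) a
  inf_le_right : ∀ a b, toEffectAlgebra.le (inf a b) b
  le_inf : ∀ a b c, toEffectAlgebra.le c a → toEffectAlgebra.le c b →
    toEffectAlgebra.le c (inf a b)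
  le_sup_left : ∀ a b, toEffectAlgebra.le a (sup a b)
  le_sup_right : ∀ a b, toEffectAlgebra.le b (sup a b)
  sup_le : ∀ a b c, toEffectAlgebra.le a c → toEffectAlgebra.le b c →
    toEffectAlgebra.le (sup a b) c

/-- The total operation `x·y := ((x'∧y)⊕y')'` on a lattice effect algebra
(well defined since `x'∧y ≤ y`). -/
def LatticeEffectAlgebra.prod {E : Type*} (A : LatticeEffectAlgebra E) (x y : E) : E :=
  A.compl (A.add (A.inf (A.compl x) y) (A.compl y))


namespace EffectAlgebra

variable {E : Type*} (A : EffectAlgebra E)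

theorem compl_compl (x : E) : A.compl (A.compl x) = x := by
  obtain ⟨hd, he⟩ := A.E1 _ _ (A.E3a x)
  exact (A.E3c _ _ hd (he ▸ A.E3b x)).symm

theorem compl_one : A.compl A.one = A.zero :=
  A.E4 _ (A.E1 _ _ (A.E3a A.one)).1

theorem add_zero (x : E) : A.add x A.zero = x := by
  obtain ⟨hd, he⟩ := A.E1 _ _ (A.E3a x)
  have hone : A.add (A.compl x) x = A.one := he ▸ A.E3b x
  have hzero := A.E3a A.one
  have hsum := A.E3b A.one
  rw [compl_one] at hzero hsum
  rw [← hone] at hzero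
  obtain ⟨-, h₁, h₂⟩ := A.E2 _ _ _ hd hzero
  rw [hone, hsum] at h₂
  rw [A.E3c _ _ h₁ h₂.symm, compl_compl]

theorem eq_zero_of_add_eq_self {x y : E} (hd : A.D x y) (h : A.add x y = x) : y = A.zero := by
  obtain ⟨hd', he⟩ := A.E1 _ _ hd
  have hx : A.D (A.add y x) (A.compl x) := by
    rw [← he, h]
    exact A.E3a x
  obtain ⟨-, h₁, -⟩ := A.E2 _ _ _ hd' hx
  rw [A.E3b] at h₁
  exact A.E4 _ h₁

theorem eq_zero_of_add_eq_zero {x y : E} (hd : A.D x y) (h : A.add x y = A.zero) :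
    y = A.zero := by
  have hzero := (A.E1 _ _ (A.E3a A.one)).1
  rw [compl_one, ← h] at hzero
  exact A.E4 _ (A.E2 _ _ _ hd hzero).1

theorem le_antisymm {x y : E} (hxy : A.le x y) (hyx : A.le y x) : x = y := by
  obtain ⟨c, hc, rfl⟩ := hxy
  obtain ⟨d, hd, he⟩ := hyx
  obtain ⟨h₁, h₂, h₃⟩ := A.E2 _ _ _ hc hd
  have hcd := A.eq_zero_of_add_eq_self h₂ (h₃ ▸ he)
  rw [A.eq_zero_of_add_eq_zero h₁ hcd, add_zero] at he
  exact he.symm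

theorem le_refl (x : E) : A.le x x := by
  have hzero := A.E3a A.one
  obtain ⟨hd, he⟩ := A.E1 _ _ (A.E3a x)
  rw [compl_one, ← A.E3b x, he] at hzero
  exact ⟨A.zero, (A.E2 _ _ _ hd hzero).1, A.add_zero x⟩

theorem compl_le_compl {x y : E} (h : A.le x y) : A.le (A.compl y) (A.compl x) := by
  obtain ⟨d, hd, rfl⟩ := h
  obtain ⟨h₁, h₂, h₃⟩ := A.E2 _ _ _ hd (A.E3a _)
  rw [A.E3b] at h₃
  obtain ⟨h₄, h₅⟩ := A.E1 _ _ h₁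
  exact ⟨d, h₄, by rw [← h₅, A.E3c _ _ h₂ h₃.symm]⟩

theorem D_compl_of_le {x y : E} (h : A.le x y) : A.D x (A.compl y) := by
  obtain ⟨d, hd, rfl⟩ := h
  obtain ⟨hd', he⟩ := A.E1 _ _ hd
  have hx := A.E3a (A.add x d)
  rw [he] at hx ⊢
  exact (A.E2 _ _ _ hd' hx).1

/-- If `x ⊕ y` is defined, then `y ⊕ (x ⊕ y)'` is defined and equal to `x'`. -/
theorem add_compl_add {x y : E} (h : A.D x y) :
    A.D y (A.compl (A.add x y)) ∧ A.add y (A.compl (A.add x y)) = A.compl x := by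
  obtain ⟨h₁, h₂, h₃⟩ := A.E2 _ _ _ h (A.E3a _)
  rw [A.E3b] at h₃
  exact ⟨h₁, A.E3c _ _ h₂ h₃.symm⟩

end EffectAlgebra

namespace LatticeEffectAlgebra

variable {E : Type*} (A : LatticeEffectAlgebra E)

theorem inf_comm (x y : E) : A.inf x y = A.inf y x :=
  A.le_antisymm
    (A.le_inf _ _ _ (A.inf_le_right x y) (A.inf_le_left x y))
    (A.le_inf _ _ _ (A.inf_le_right y x) (A.inf_le_left y x))

theorem inf_eq_left {x y : E} (h : A.toEffectAlgebra.le x y) : A.inf x y = x :=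
  A.le_antisymm (A.inf_le_left x y) (A.le_inf _ _ _ (A.le_refl x) h)

/-- The product `x·y = y ⊖ (x' ∧ y)` subtracts `x'` from `y` whenever `x' ≤ y`. -/
theorem prod_of_compl_le {x y : E} (h : A.toEffectAlgebra.le (A.compl x) y) :
    A.prod x y = A.compl (A.add (A.compl x) (A.compl y)) := by
  rw [prod, A.inf_eq_left h]

theorem prod_compl_prod (x y : E) :
    A.prod (A.compl (A.prod x y)) y = A.inf (A.compl x) y := by
  obtain ⟨hd, he⟩ := A.add_compl_add (A.D_compl_of_le (A.inf_le_right (A.compl x) y))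
  change A.D _ (A.prod x y) at hd
  change A.add _ (A.prod x y) = _ at he
  have hle : A.toEffectAlgebra.le (A.prod x y) y := by
    obtain ⟨hd', he'⟩ := A.E1 _ _ (A.D_compl_of_le (A.inf_le_right (A.compl x) y))
    have := A.compl_le_compl ⟨_, hd', rfl⟩
    rwa [A.compl_compl, ← he'] at this
  rw [A.prod_of_compl_le (by rwa [A.compl_compl]), A.compl_compl, ← (A.E1 _ _ hd).2, he,
    A.compl_compl]

end LatticeEffectAlgebra

/-- (NG5) holds in `(E;·,',0,1)` for a lattice effect algebra `E` with
`x·y := ((x'∧y)⊕y')'`: `a·b = b·[(b'·a')'·a']'`. -/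
theorem ng5_holds {E : Type*} (A : LatticeEffectAlgebra E) (a b : E) :
    A.prod a b =
      A.prod b (A.compl (A.prod (A.compl (A.prod (A.compl b) (A.compl a))) (A.compl a))) := by
  rw [A.prod_compl_prod, A.compl_compl]
  have hle := A.inf_le_left b (A.compl a)
  rw [A.prod_of_compl_le (A.compl_le_compl hle), A.compl_compl,
    ← (A.E1 _ _ (A.D_compl_of_le hle)).2, LatticeEffectAlgebra.prod, A.inf_comm]
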